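/- Let R be a one-dimensional Cohen-Macaulay local ring, M a nonzero finitely generated torsion-free R-module with minimal multiplicity, e = e_R(M), v = μ_R(M), and (x) a minimal reduction of m. Then μ_R(mM) = e and there is a short exact sequence 0 → k^{e−v} → M/xM → k^{v} → 0 of R-modules. -/

import Mathlib

/-!
Write `m` for the maximal ideal, `k` for the residue field and `ℓ` for length. The element `x` is
`M`-regular: if `r ∈ m` is a nonzerodivisor, a large power of `r` lies in `x m^N`, so `x` divides a
nonzerodivisor. Hence multiplication by `x` gives, for every submodule `P` of `M`, an exact sequence
`0 → M/P → M/xP → M/xM → 0`, so that `ℓ(M/xP) = ℓ(M/P) + ℓ(M/xM)`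
(`length_quotient_map_of_injective`).

Minimal multiplicity gives `m^{n+1} M = x m^n M` for all `n ≥ 1`, so
`ℓ(M/m^{n+1}M) = ℓ(M/m^n M) + ℓ(M/xM)` already for `n ≥ 1`, and therefore `e = ℓ(M/xM)`. For `n = 1`
the same identity, compared with `ℓ(M/m²M) = ℓ(mM/m²M) + ℓ(M/mM)`, gives `μ(mM) = ℓ(mM/m²M) = e`.

The exact sequence is `0 → mM/xM → M/xM → M/mM → 0`. Both outer terms are killed by `m`, because
`m²M = x m M ⊆ xM`, so each is `k^n` with `n` its length (`exists_equiv_pi_residueField`); the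
lengths are `v = μ(M)` on the right and, by additivity, `e - v` on the left.
-/

open IsLocalRing Filter

section Defs

variable (R : Type*) [CommRing R]

/-- The length of an `R`-module `M`: the Krull dimension of its lattice of submodules. -/
noncomputable def mlen (M : Type*) [AddCommGroup M] [Module R M] : WithBot ℕ∞ :=
  Order.krullDim (Submodule R M)

/-- The minimal number of generators of an `R`-module. -/
noncomputable def mu (M : Type*) [AddCommGroup M] [Module R M] : ℕ :=
  sInf {n | ∃ s : Finset M, s.card = n ∧ Submodule.span R (s : Set M) = ⊤}

/-- The Hilbert–Samuel multiplicity `e_R(I, M)` of a finitely generated module over a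
one-dimensional local ring with respect to an `m`-primary ideal `I`: the eventual value of
`ℓ(M/I^{n+1}M) - ℓ(M/I^n M)`. -/
noncomputable def hsMult (I : Ideal R) (M : Type*) [AddCommGroup M] [Module R M] : ℕ∞ := by
  classical
  exact if h : ∃ e : ℕ∞, ∀ᶠ n in atTop,
      mlen R (M ⧸ (I ^ (n + 1) • (⊤ : Submodule R M))) =
        mlen R (M ⧸ (I ^ n • (⊤ : Submodule R M))) + (e : WithBot ℕ∞)
    then h.choose else 0

/-- The length of the subquotient `P/Q` for submodules `Q ⊆ P` of `M`. -/
noncomputable def qlen {M : Type*} [AddCommGroup M] [Module R M]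
    (P Q : Submodule R M) : WithBot ℕ∞ :=
  mlen R (↥P ⧸ Q.comap P.subtype)

/-- `(x)` is a minimal reduction of `I` (one-dimensional situation): a principal subideal with
`I^{n+1} = x I^n` for all large `n`. -/
def IsMinimalReduction (I : Ideal R) (x : R) : Prop :=
  x ∈ I ∧ ∃ N : ℕ, ∀ n ≥ N, I ^ (n + 1) = Ideal.span {x} * I ^ n

/-- A module is torsion-free if non zero-divisors of `R` act injectively. -/
def TorsionFree (M : Type*) [AddCommGroup M] [Module R M] : Prop :=
  ∀ r ∈ nonZeroDivisors R, ∀ m : M, r • m = 0 → m = 0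

/-- The embedding dimension of a local ring: the minimal number of generators of the
maximal ideal. -/
noncomputable def embdim (R : Type*) [CommRing R] [IsLocalRing R] : ℕ :=
  sInf {n | ∃ s : Finset R, s.card = n ∧ Ideal.span (s : Set R) = maximalIdeal R}

/-- A Noetherian local ring is regular iff its embedding dimension equals its Krull
dimension. -/
def IsRegularLocal (R : Type*) [CommRing R] [IsLocalRing R] : Prop :=
  ((embdim R : ℕ∞) : WithBot ℕ∞) = ringKrullDim R

/-- The colon `(J :_Q K)` of two `R`-submodules of an `R`-algebra `Q`. -/
def colonQ {Q : Type*} [CommRing Q] [Algebra R Q] (J K : Submodule R Q) : Submodule R Q where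
  carrier := {q | ∀ k ∈ K, q * k ∈ J}
  add_mem' := by
    intro a b ha hb k hk
    simpa [add_mul] using J.add_mem (ha k hk) (hb k hk)
  zero_mem' := by intro k hk; rw [zero_mul]; exact J.zero_mem
  smul_mem' := by
    intro c a ha k hk
    simpa [smul_mul_assoc] using J.smul_mem c (ha k hk)

end Defs

/-- A finitely generated module killed by the maximal ideal is a finite power of the residue field,
with exponent its length. -/
lemma exists_equiv_pi_residueField (R : Type*) [CommRing R] [IsLocalRing R]
    (N : Type*) [AddCommGroup N] [Module R N] [Module.Finite R N]
    (h : ∀ r ∈ maximalIdeal R, ∀ y : N, r • y = 0) :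
    ∃ n : ℕ, Module.length R N = n ∧ Nonempty (N ≃ₗ[R] (Fin n → ResidueField R)) := by
  have ht : Module.IsTorsionBySet R N (maximalIdeal R : Set R) := fun y r => h r.1 r.2 y
  let : Module (ResidueField R) N := ht.module
  have : IsScalarTower R (ResidueField R) N := ht.isScalarTower
  have : Module.Finite (ResidueField R) N := Module.Finite.of_restrictScalars_finite R _ N
  refine ⟨Module.finrank (ResidueField R) N, ?_,
    ⟨(Module.finBasis (ResidueField R) N).equivFun.restrictScalars R⟩⟩
  rw [Module.length_eq_of_surjective (S := R) (R := ResidueField R) residue_surjective,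
    Module.length_eq_finrank]

lemma mu_eq_spanFinrank (R : Type*) [CommRing R] (N : Type*) [AddCommGroup N] [Module R N] :
    mu R N = (⊤ : Submodule R N).spanFinrank := by
  rw [Submodule.spanFinrank_eq_iInf, mu, iInf]
  congr 1
  ext n
  constructor
  · rintro ⟨s, hs, h⟩
    exact ⟨⟨s, h⟩, hs⟩
  · rintro ⟨⟨s, h⟩, hs⟩
    exact ⟨s, hs, h⟩

/-- Nakayama's lemma: `μ(N) = ℓ(N/mN)`. -/
lemma length_quotient_maximalIdeal_smul (R : Type*) [CommRing R] [IsLocalRing R]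
    (N : Type*) [AddCommGroup N] [Module R N] [Module.Finite R N] :
    Module.length R (N ⧸ (maximalIdeal R • (⊤ : Submodule R N))) = mu R N := by
  let : Field (R ⧸ maximalIdeal R) := Ideal.Quotient.field _
  have : Module.Finite (R ⧸ maximalIdeal R) (N ⧸ (maximalIdeal R • (⊤ : Submodule R N))) :=
    Module.Finite.of_restrictScalars_finite R _ _
  obtain ⟨s, hs⟩ := (inferInstance : Module.Finite R N)
  -- Nakayama is available for a submodule of a module; apply it to `⊤ ≃ N`.
  have key := IsLocalRing.spanFinrank_eq_finrank_quotient (⊤ : Submodule R N) ⟨s, hs⟩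
  have e : ((⊤ : Submodule R N) ⧸ (maximalIdeal R • (⊤ : Submodule R (⊤ : Submodule R N))))
      ≃ₗ[R] (N ⧸ (maximalIdeal R • (⊤ : Submodule R N))) :=
    Submodule.Quotient.equiv _ _ Submodule.topEquiv (by
      rw [Submodule.map_smul'']; congr 1; simp)
  rw [mu_eq_spanFinrank, key, ← e.length_eq,
    Module.length_eq_of_surjective (S := R) (R := R ⧸ maximalIdeal R) Ideal.Quotient.mk_surjective,
    Module.length_eq_finrank]

/-- Length along the exact sequence `0 → M/P → M/φ(P) → M/φ(M) → 0` of an injective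
endomorphism `φ`. -/
lemma length_quotient_map_of_injective {R : Type*} [CommRing R]
    {M : Type*} [AddCommGroup M] [Module R M] (φ : M →ₗ[R] M) (hφ : Function.Injective φ)
    (P : Submodule R M) :
    Module.length R (M ⧸ P.map φ) =
      Module.length R (M ⧸ P) + Module.length R (M ⧸ LinearMap.range φ) := by
  refine Module.length_eq_add_of_exact
    (P.mapQ (P.map φ) φ (Submodule.le_comap_map _ _))
    (Submodule.factor (LinearMap.map_le_range)) ?_ (Submodule.factor_surjective _) ?_
  · rw [← LinearMap.ker_eq_bot, Submodule.ker_mapQ, Submodule.comap_map_eq_of_injective hφ]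
    simp
  · rw [LinearMap.exact_iff, Submodule.factor, Submodule.ker_mapQ, Submodule.range_mapQ,
      Submodule.comap_id]

/-- Length along the exact sequence `0 → P/IP → M/IP → M/P → 0`. -/
lemma length_quotient_smul {R : Type*} [CommRing R]
    {M : Type*} [AddCommGroup M] [Module R M] (I : Ideal R) (P : Submodule R M) :
    Module.length R (M ⧸ (I • P)) =
      Module.length R (P ⧸ (I • (⊤ : Submodule R P))) + Module.length R (M ⧸ P) := by
  have hmap : (I • (⊤ : Submodule R P)).map P.subtype = I • P := by
    rw [Submodule.map_smul'', Submodule.map_subtype_top]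
  have hcomap : (I • P).comap P.subtype = I • (⊤ : Submodule R P) := by
    rw [← hmap, Submodule.comap_map_eq_of_injective P.subtype_injective]
  refine Module.length_eq_add_of_exact
    ((I • (⊤ : Submodule R P)).mapQ (I • P) P.subtype hcomap.ge)
    (Submodule.factor Submodule.smul_le_right) ?_ (Submodule.factor_surjective _) ?_
  · rw [← LinearMap.ker_eq_bot, Submodule.ker_mapQ, hcomap, Submodule.mkQ_map_self]
  · rw [LinearMap.exact_iff, Submodule.factor, Submodule.ker_mapQ, Submodule.range_mapQ,
      Submodule.comap_id, Submodule.range_subtype]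

/-- If the Hilbert-Samuel function grows by the constant `c` from some point on and takes finite
values, then the multiplicity is `c`. Finiteness makes the constant unique. -/
lemma hsMult_eq {R : Type*} [CommRing R] {I : Ideal R} {M : Type*} [AddCommGroup M] [Module R M]
    (c : ℕ∞)
    (hfin : ∀ n ≥ 1, Module.length R (M ⧸ (I ^ n • (⊤ : Submodule R M))) ≠ ⊤)
    (hstep : ∀ n ≥ 1, Module.length R (M ⧸ (I ^ (n + 1) • (⊤ : Submodule R M))) =
      Module.length R (M ⧸ (I ^ n • (⊤ : Submodule R M))) + c) :
    hsMult R I M = c := by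
  have hex : ∃ e : ℕ∞, ∀ᶠ n in atTop,
      mlen R (M ⧸ (I ^ (n + 1) • (⊤ : Submodule R M))) =
        mlen R (M ⧸ (I ^ n • (⊤ : Submodule R M))) + (e : WithBot ℕ∞) := by
    refine ⟨c, eventually_atTop.2 ⟨1, fun n hn => ?_⟩⟩
    rw [mlen, mlen, ← Module.coe_length, ← Module.coe_length, hstep n hn, WithBot.coe_add]
  rw [hsMult, dif_pos hex]
  obtain ⟨n, h, hn⟩ := (hex.choose_spec.and (eventually_ge_atTop 1)).exists
  rw [mlen, mlen, ← Module.coe_length, ← Module.coe_length, ← WithBot.coe_add, WithBot.coe_inj,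
    hstep n hn] at h
  exact (WithTop.add_left_cancel (hfin n hn) h).symm

lemma mem_nonZeroDivisors_of_isMinimalReduction {R : Type*} [CommRing R] {I : Ideal R} {x : R}
    (hx : IsMinimalReduction R I x) (hI : ∃ r ∈ I, r ∈ nonZeroDivisors R) :
    x ∈ nonZeroDivisors R := by
  obtain ⟨-, N, hN⟩ := hx
  obtain ⟨r, hrI, hr⟩ := hI
  have h := Ideal.pow_mem_pow hrI (N + 1)
  rw [hN N le_rfl, Ideal.mem_span_singleton_mul] at h
  obtain ⟨y, -, hy⟩ := h
  have h' : x * y ∈ nonZeroDivisors R := hy ▸ pow_mem hr (N + 1)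
  exact (mul_mem_nonZeroDivisors.1 h').1

/-- if `M` is a nonzero f.g. torsion-free module of minimal multiplicity,
`e = e_R(M)`, `v = μ_R(M)`, and `(x)` a minimal reduction of `m`, then `μ_R(mM) = e` and there
is a short exact sequence `0 → k^{e-v} → M/xM → k^v → 0`. -/
theorem stmt18 (R : Type*) [CommRing R] [IsLocalRing R] [IsNoetherianRing R]
    [Infinite (ResidueField R)]
    (hdim : ringKrullDim R = 1)
    (hCM : ∃ r ∈ maximalIdeal R, r ∈ nonZeroDivisors R)
    (M : Type*) [AddCommGroup M] [Module R M] [Module.Finite R M] [Nontrivial M]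
    (hTF : TorsionFree R M)
    (x : R) (hx : IsMinimalReduction R (maximalIdeal R) x)
    (hmm : (maximalIdeal R) ^ 2 • (⊤ : Submodule R M) =
      Ideal.span {x} • (maximalIdeal R • (⊤ : Submodule R M)))
    (e : ℕ) (he : (e : ℕ∞) = hsMult R (maximalIdeal R) M)
    (v : ℕ) (hv : v = mu R M) :
    mu R ↥(maximalIdeal R • (⊤ : Submodule R M)) = e ∧
    ∃ (f : (Fin (e - v) → ResidueField R) →ₗ[R]
          (M ⧸ (Ideal.span {x} • (⊤ : Submodule R M))))
      (g : (M ⧸ (Ideal.span {x} • (⊤ : Submodule R M))) →ₗ[R]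
          (Fin v → ResidueField R)),
      Function.Injective f ∧ Function.Surjective g ∧ LinearMap.range f = LinearMap.ker g := by
  set m := maximalIdeal R with hm
  let φ : M →ₗ[R] M := LinearMap.lsmul R M x
  have hφ : Function.Injective φ := by
    rw [← LinearMap.ker_eq_bot, LinearMap.ker_eq_bot']
    exact hTF x (mem_nonZeroDivisors_of_isMinimalReduction hx hCM)
  have hspan : ∀ P : Submodule R M, Ideal.span {x} • P = P.map φ := fun P => by
    rw [Submodule.ideal_span_singleton_smul]; rfl
  have hrange : Ideal.span {x} • (⊤ : Submodule R M) = LinearMap.range φ := by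
    rw [hspan, Submodule.map_top]
  have hle : Ideal.span {x} • (⊤ : Submodule R M) ≤ m • ⊤ :=
    Submodule.smul_mono_left ((Ideal.span_singleton_le_iff_mem _).2 hx.1)
  have hpow : ∀ n ≥ 1, m ^ (n + 1) • (⊤ : Submodule R M) =
      (m ^ n • (⊤ : Submodule R M)).map φ := by
    intro n hn
    obtain ⟨j, rfl⟩ := Nat.exists_eq_add_of_le' hn
    calc m ^ (j + 1 + 1) • (⊤ : Submodule R M) = m ^ j • (m ^ 2 • ⊤) := by
          rw [← Submodule.mul_smul, ← pow_add]
      _ = Ideal.span {x} • (m ^ (j + 1) • ⊤) := by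
          rw [hmm, pow_succ, Submodule.mul_smul, ← Submodule.mul_smul, ← Submodule.mul_smul (m ^ j),
            ← Submodule.mul_smul, ← Submodule.mul_smul]
          congr 1
          ring
      _ = _ := hspan _
  have hstep : ∀ n ≥ 1, Module.length R (M ⧸ (m ^ (n + 1) • (⊤ : Submodule R M))) =
      Module.length R (M ⧸ (m ^ n • (⊤ : Submodule R M))) +
        Module.length R (M ⧸ (Ideal.span {x} • (⊤ : Submodule R M))) := by
    intro n hn
    rw [hpow n hn, length_quotient_map_of_injective φ hφ, hrange]
  -- `π : M/xM → M/mM`, whose kernel is `mM/xM`.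
  let π : (M ⧸ (Ideal.span {x} • (⊤ : Submodule R M))) →ₗ[R] (M ⧸ (m • (⊤ : Submodule R M))) :=
    Submodule.factor hle
  have hπ : Function.Surjective π := Submodule.factor_surjective _
  have hker : LinearMap.ker π =
      (m • (⊤ : Submodule R M)).map (Ideal.span {x} • (⊤ : Submodule R M)).mkQ := by
    simp only [π, Submodule.factor, Submodule.ker_mapQ, Submodule.comap_id]
  have hkill₁ : ∀ r ∈ m, ∀ y : LinearMap.ker π, r • y = 0 := by
    rintro r hr ⟨y, hy⟩
    rw [hker] at hy
    obtain ⟨z, hz, rfl⟩ := hy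
    apply Subtype.ext
    change r • (Ideal.span {x} • (⊤ : Submodule R M)).mkQ z = 0
    rw [← map_smul, Submodule.mkQ_apply, Submodule.Quotient.mk_eq_zero]
    have h2 : r • z ∈ m ^ 2 • (⊤ : Submodule R M) := by
      rw [pow_two, Submodule.mul_smul]
      exact Submodule.smul_mem_smul hr hz
    rw [hmm] at h2
    exact Submodule.smul_mono le_rfl le_top h2
  have hkill₂ : ∀ r ∈ m, ∀ y : M ⧸ (m • (⊤ : Submodule R M)), r • y = 0 := by
    intro r hr y
    obtain ⟨z, rfl⟩ := Submodule.mkQ_surjective _ y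
    rw [← map_smul, Submodule.mkQ_apply, Submodule.Quotient.mk_eq_zero]
    exact Submodule.smul_mem_smul hr trivial
  have : IsNoetherian R M := isNoetherian_of_isNoetherianRing_of_finite R M
  obtain ⟨w, hw, ⟨E₁⟩⟩ := exists_equiv_pi_residueField R (LinearMap.ker π) hkill₁
  obtain ⟨v', hv', ⟨E₂⟩⟩ := exists_equiv_pi_residueField R (M ⧸ (m • (⊤ : Submodule R M))) hkill₂
  obtain rfl : v' = v := by
    have h := length_quotient_maximalIdeal_smul R M
    rw [← hm, hv', ← hv] at h
    exact_mod_cast h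
  have hc : Module.length R (M ⧸ (Ideal.span {x} • (⊤ : Submodule R M))) = ((w + v' : ℕ) : ℕ∞) := by
    rw [Module.length_eq_add_of_exact (LinearMap.ker π).subtype π (Submodule.subtype_injective _) hπ
      (LinearMap.exact_subtype_ker_map π), hw, hv', Nat.cast_add]
  have hfin : ∀ n ≥ 1, Module.length R (M ⧸ (m ^ n • (⊤ : Submodule R M))) ≠ ⊤ := by
    intro n hn
    induction n, hn using Nat.le_induction with
    | base => rw [pow_one, hv']; exact ENat.natCast_ne_top _
    | succ n hn ih =>
      rw [hstep n hn, hc]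
      exact WithTop.add_ne_top.2 ⟨ih, ENat.natCast_ne_top _⟩
  obtain rfl : e = w + v' := by
    rw [hsMult_eq _ hfin hstep, hc] at he
    exact_mod_cast he
  refine ⟨?_, ?_⟩
  · -- Compare two expressions for `ℓ(M/m²M)`.
    have h1 := hstep 1 le_rfl
    rw [pow_one, hc, hv', one_add_one_eq_two, pow_two, Submodule.mul_smul, length_quotient_smul,
      length_quotient_maximalIdeal_smul, hv'] at h1
    have h2 : mu R ↥(m • (⊤ : Submodule R M)) + v' = v' + (w + v') := by exact_mod_cast h1
    omega
  · rw [Nat.add_sub_cancel]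
    refine ⟨(LinearMap.ker π).subtype ∘ₗ E₁.symm.toLinearMap, E₂.toLinearMap ∘ₗ π, ?_, ?_, ?_⟩
    · exact (Submodule.subtype_injective _).comp E₁.symm.injective
    · exact E₂.surjective.comp hπ
    · rw [LinearEquiv.range_comp, Submodule.range_subtype, LinearEquiv.ker_comp]
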